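/- Let f : ℝⁿ → ℝ be a smooth function which, together with all its derivatives, grows at most polynomially. Then there exist C ≥ 0 and Δt* > 0 such that for all 0 < Δt ≤ Δt* and all q ∈ ℝⁿ, |E_{G,U}[f(δ_Δt(q,G,U))] − f(0) − Δt(−∇V(q)·∇f(0) + Δf(0))| ≤ C Δt². -/

import Mathlib

/-!
Averaging over the uniform variable first, and writing `x = -dt ∇V(q) + √(2 dt) g` for the proposed
increment, the observable is `E[f(x)] - E[(1 - R)(f(x) - f(0))]`.

* The first term is the Euler–Maruyama step (`euler_expansion`). A Taylor expansion of `f` splits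
  `f(x)` into `taylorPart` and a remainder bounded by `dt²` times a polynomial in `‖g‖`. In the
  Gaussian average of `taylorPart` the odd multilinear terms vanish and the quadratic term gives the
  Laplacian, since the covariance of `gauss n` is the identity (`integral_quadratic`).
* The second term is `O(dt²)` (`rejection_term_bound`). The logarithm of the Metropolis ratio is the
  error of the trapezoidal rule for `V` along the move, which is `O(‖x‖³)`, plus
  `dt / 4 * (‖∇V(q)‖² - ‖∇V(q + x)‖²) = O(dt ‖x‖)`. Hence `1 - R = O(dt^(3/2))`, while
  `f(x) - f(0) = O(dt^(1/2))`, up to polynomial factors in `‖g‖`.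

Uniformity in `q` holds because the derivatives of the periodic function `V` are bounded
(`periodic_deriv_bounded`); polynomial moments are finite because `gauss n` is Mathlib's standard
Gaussian (`gauss_eq_stdGaussian`).
-/

open MeasureTheory RealInnerProductSpace

noncomputable section

abbrev En (n : ℕ) := EuclideanSpace ℝ (Fin n)

/-- Gaussian proposal density of the Euler–Maruyama scheme. -/
def Tker {n : ℕ} (V : En n → ℝ) (dt : ℝ) (q q' : En n) : ℝ :=
  (4 * Real.pi * dt) ^ (-(n : ℝ) / 2) *
    Real.exp (-‖q' - q + dt • gradient V q‖ ^ 2 / (4 * dt))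

/-- Metropolis acceptance probability. -/
def Rk {n : ℕ} (V : En n → ℝ) (dt : ℝ) (q q' : En n) : ℝ :=
  min 1 (Real.exp (-V q') * Tker V dt q' q / (Real.exp (-V q) * Tker V dt q q'))

/-- proposal move -/
def propMove {n : ℕ} (V : En n → ℝ) (dt : ℝ) (q g : En n) : En n :=
  q - dt • gradient V q + Real.sqrt (2 * dt) • g

def xi {n : ℕ} (V : En n → ℝ) (q g : En n) : ℝ :=
  -(Real.sqrt 2 / 6) * iteratedFDeriv ℝ 3 V q (fun _ => g) +
    (Real.sqrt 2 / 2) * ⟪gradient V q, fderiv ℝ (gradient V) q g⟫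

def xiPlus {n : ℕ} (V : En n → ℝ) (q g : En n) : ℝ := max (xi V q g) 0

/-- standard Gaussian measure on ℝⁿ -/
def gauss (n : ℕ) : Measure (En n) :=
  volume.withDensity fun g =>
    ENNReal.ofReal ((2 * Real.pi) ^ (-(n : ℝ) / 2) * Real.exp (-‖g‖ ^ 2 / 2))

/-- fundamental domain of the torus -/
def Box (n : ℕ) (L : ℝ) : Set (En n) := {q | ∀ i, q i ∈ Set.Ico (0 : ℝ) L}

/-- integral with respect to the Gibbs measure μ on the torus M -/
def muInt {n : ℕ} (V : En n → ℝ) (L : ℝ) (f : En n → ℝ) : ℝ :=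
  (∫ q in Box n L, Real.exp (-V q))⁻¹ * ∫ q in Box n L, f q * Real.exp (-V q)

/-- Laplacian -/
def lap {n : ℕ} (ψ : En n → ℝ) (q : En n) : ℝ :=
  ∑ i, iteratedFDeriv ℝ 2 ψ q (fun _ => EuclideanSpace.single i (1 : ℝ))

/-- generator of the overdamped Langevin dynamics -/
def gen {n : ℕ} (V ψ : En n → ℝ) (q : En n) : ℝ :=
  -⟪gradient V q, gradient ψ q⟫ + lap ψ q

/-- MALA transition operator on periodic functions -/
def Pmala {n : ℕ} (V : En n → ℝ) (dt : ℝ) (f : En n → ℝ) (q : En n) : ℝ :=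
  f q + ∫ q', Rk V dt q q' * Tker V dt q q' * (f q' - f q)

/-- the operator D₁ -/
def D1op {n : ℕ} (V ψ : En n → ℝ) (q : En n) : ℝ :=
  2 * ∑ i, ∑ j, (iteratedFDeriv ℝ 2 V q ![EuclideanSpace.single i (1:ℝ), EuclideanSpace.single j (1:ℝ)]) *
      (iteratedFDeriv ℝ 2 ψ q ![EuclideanSpace.single i (1:ℝ), EuclideanSpace.single j (1:ℝ)])
    + ⟪gradient (fun x => lap V x) q, gradient ψ q⟫
    - ⟪gradient V q, fderiv ℝ (gradient V) q (gradient ψ q)⟫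

/-- the operator D₂ -/
def D2op {n : ℕ} (V ψ : En n → ℝ) (q : En n) : ℝ :=
  -Real.sqrt 2 * ⟪∫ g, xiPlus V q g • g ∂(gauss n), gradient ψ q⟫

/-- the operator A appearing in the expansion of the MALA evolution operator -/
def Aop {n : ℕ} (V ψ : En n → ℝ) (q : En n) : ℝ :=
  (gen V (gen V ψ) q + D1op V ψ q + D2op V ψ q) / 2

/-- Metropolized increment -/
def deltaInc {n : ℕ} (V : En n → ℝ) (dt : ℝ) (q g : En n) (u : ℝ) : En n :=
  if u ≤ Rk V dt q (propMove V dt q g) then (-dt) • gradient V q + Real.sqrt (2 * dt) • g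
  else 0

/-- expectation over G (std Gaussian) and U (uniform on [0,1]) of the increment -/
def EguDelta {n : ℕ} (V : En n → ℝ) (dt : ℝ) (q : En n) : En n :=
  ∫ g, (∫ u in Set.Icc (0 : ℝ) 1, deltaInc V dt q g u) ∂(gauss n)


/-- average of an observable of the Metropolized increment over G and U -/
def obsbar {n : ℕ} (V : En n → ℝ) (dt : ℝ) (f : En n → ℝ) (q : En n) : ℝ :=
  ∫ g, (∫ u in Set.Icc (0 : ℝ) 1, f (deltaInc V dt q g u)) ∂(gauss n)


/-! ### The Gaussian measure -/

instance isFiniteMeasure_gauss (n : ℕ) : IsFiniteMeasure (gauss n) := by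
  refine isFiniteMeasure_withDensity_ofReal ?_
  have h := (GaussianFourier.integrable_cexp_neg_mul_sq_norm_add (V := En n) (b := (1 / 2 : ℂ))
    (by norm_num) 0 0).norm
  refine (Integrable.const_mul ?_ _).2
  refine h.congr (Filter.Eventually.of_forall fun v => ?_)
  simp only [Complex.norm_exp]
  congr 1
  have : (-(1 / 2 : ℂ) * (‖v‖ : ℂ) ^ 2 + 0 * ((inner ℝ (0 : En n) v : ℝ) : ℂ))
      = ((-‖v‖ ^ 2 / 2 : ℝ) : ℂ) := by
    push_cast; ring
  rw [this, Complex.ofReal_re]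

/-- `gauss n` is Mathlib's standard Gaussian: both have characteristic function `exp (-‖t‖² / 2)`. -/
theorem gauss_eq_stdGaussian (n : ℕ) : gauss n = ProbabilityTheory.stdGaussian (En n) := by
  refine Measure.ext_of_charFun (funext fun t => ?_)
  rw [ProbabilityTheory.charFun_stdGaussian, charFun_apply, gauss,
    integral_withDensity_eq_integral_toReal_smul (by fun_prop) (by simp)]
  have hpi : (0 : ℝ) < 2 * Real.pi := by positivity
  have key := GaussianFourier.integral_cexp_neg_mul_sq_norm_add (V := En n) (b := (1 / 2 : ℂ))
    (by norm_num) Complex.I t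
  have e : ∀ v : En n, (ENNReal.ofReal ((2 * Real.pi) ^ (-(n : ℝ) / 2)
        * Real.exp (-‖v‖ ^ 2 / 2))).toReal • Complex.exp (((inner ℝ v t : ℝ) : ℂ) * Complex.I)
      = (((2 * Real.pi) ^ (-(n : ℝ) / 2) : ℝ) : ℂ) *
        Complex.exp (-(1 / 2 : ℂ) * (‖v‖ : ℂ) ^ 2 + Complex.I * ((inner ℝ t v : ℝ) : ℂ)) := by
    intro v
    rw [ENNReal.toReal_ofReal (by positivity), Complex.exp_add, real_inner_comm, Complex.real_smul]
    push_cast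
    rw [show -(‖v‖ : ℂ) ^ 2 / 2 = -(1 / 2 : ℂ) * (‖v‖ : ℂ) ^ 2 by ring, mul_comm Complex.I]
    ring
  simp_rw [e]
  rw [integral_const_mul, key, ← mul_assoc]
  have h1 : (((2 * Real.pi) ^ (-(n : ℝ) / 2) : ℝ) : ℂ) *
      ((Real.pi : ℂ) / (1 / 2)) ^ ((Module.finrank ℝ (En n) : ℂ) / 2) = 1 := by
    rw [show ((Real.pi : ℂ) / (1 / 2)) = ((2 * Real.pi : ℝ) : ℂ) by push_cast; ring,
      finrank_euclideanSpace_fin,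
      show ((n : ℂ) / 2) = (((n : ℝ) / 2 : ℝ) : ℂ) by push_cast; ring,
      ← Complex.ofReal_cpow hpi.le, ← Complex.ofReal_mul, ← Real.rpow_add hpi]
    rw [neg_div, neg_add_cancel]; simp
  rw [h1, one_mul, Complex.I_sq]
  congr 1
  ring

instance isProbabilityMeasure_gauss (n : ℕ) : IsProbabilityMeasure (gauss n) := by
  rw [gauss_eq_stdGaussian]; infer_instance

theorem integrable_pow_gauss (n m : ℕ) :
    Integrable (fun g : En n => (1 + ‖g‖) ^ m) (gauss n) := by
  rw [gauss_eq_stdGaussian]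
  have h0 : MemLp (fun g : En n => ‖g‖) m (ProbabilityTheory.stdGaussian (En n)) :=
    (ProbabilityTheory.IsGaussian.memLp_id (ProbabilityTheory.stdGaussian (En n)) m
      (ENNReal.natCast_ne_top m)).norm
  have h : MemLp (fun g : En n => 1 + ‖g‖) m (ProbabilityTheory.stdGaussian (En n)) :=
    MemLp.add (f := fun _ : En n => (1 : ℝ)) (memLp_const 1) h0
  refine (h.integrable_norm_pow').congr (Filter.Eventually.of_forall fun g => ?_)
  simp only [Real.norm_eq_abs]
  rw [abs_of_nonneg (by positivity)]

theorem integrable_of_bound {n : ℕ} {F : En n → ℝ} (hF : Measurable F) (K : ℝ) (m : ℕ)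
    (h : ∀ g, |F g| ≤ K * (1 + ‖g‖) ^ m) : Integrable F (gauss n) :=
  ((integrable_pow_gauss n m).const_mul K).mono' hF.aestronglyMeasurable
    (Filter.Eventually.of_forall h)

theorem integral_bound {n : ℕ} {F : En n → ℝ} (K : ℝ) (m : ℕ)
    (h : ∀ g, |F g| ≤ K * (1 + ‖g‖) ^ m) :
    |∫ g, F g ∂(gauss n)| ≤ K * ∫ g, (1 + ‖g‖) ^ m ∂(gauss n) := by
  rw [← integral_const_mul]
  have h' : ∀ g, ‖F g‖ ≤ K * (1 + ‖g‖) ^ m := h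
  exact norm_integral_le_of_norm_le ((integrable_pow_gauss n m).const_mul K)
    (Filter.Eventually.of_forall h')

/-- No integrability is needed: the integral of a non-integrable function is `0`. -/
theorem integral_odd {n : ℕ} {F : En n → ℝ} (h : ∀ g, F (-g) = -F g) :
    ∫ g, F g ∂(gauss n) = 0 := by
  have hmap : (gauss n).map (LinearIsometryEquiv.neg ℝ (E := En n)) = gauss n := by
    rw [gauss_eq_stdGaussian]
    exact ProbabilityTheory.stdGaussian_map _
  have h1 : ∫ g, F g ∂(gauss n) = ∫ g, F (-g) ∂(gauss n) := by
    conv_lhs => rw [← hmap]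
    exact (LinearIsometryEquiv.neg ℝ (E := En n)).toHomeomorph.measurableEmbedding.integral_map F
  simp only [h, integral_neg] at h1
  linarith

theorem integral_coord_mul {n : ℕ} (i j : Fin n) :
    ∫ g : En n, g i * g j ∂(gauss n) = if i = j then 1 else 0 := by
  rw [gauss_eq_stdGaussian]
  have h := ProbabilityTheory.covarianceBilin_apply
    (ProbabilityTheory.IsGaussian.memLp_two_id (μ := ProbabilityTheory.stdGaussian (En n)))
    (EuclideanSpace.single i (1 : ℝ)) (EuclideanSpace.single j (1 : ℝ))
  rw [ProbabilityTheory.covarianceBilin_stdGaussian] at h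
  simp [EuclideanSpace.inner_single_left] at h
  rw [← h, innerSL_apply_apply]
  simp [EuclideanSpace.inner_single_left]

/-- The second moment of a bilinear form under the standard Gaussian is its trace. -/
theorem integral_quadratic {n : ℕ} (B : ContinuousMultilinearMap ℝ (fun _ : Fin 2 => En n) ℝ) :
    ∫ g, B (fun _ => g) ∂(gauss n) = ∑ i, B (fun _ => EuclideanSpace.single i (1 : ℝ)) := by
  have e : ∀ g : En n, B (fun _ => g) = ∑ r : Fin 2 → Fin n,
      (g (r 0) * g (r 1)) * B (fun k => EuclideanSpace.single (r k) (1 : ℝ)) := by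
    intro g
    have hg : g = ∑ i, g i • EuclideanSpace.single i (1 : ℝ) := by
      ext j; simp [Pi.single_apply]
    conv_lhs => rw [hg]
    rw [B.map_sum]
    refine Finset.sum_congr rfl fun r _ => ?_
    rw [B.map_smul_univ (fun k => g (r k)) (fun k => EuclideanSpace.single (r k) (1 : ℝ))]
    simp
  rw [integral_congr_ae (Filter.Eventually.of_forall e), integral_finsetSum]
  · simp_rw [integral_mul_const, integral_coord_mul]
    rw [← (piFinTwoEquiv fun _ => Fin n).symm.sum_comp, Fintype.sum_prod_type]
    simp only [piFinTwoEquiv_symm_apply, Fin.cons_zero, Fin.cons_one, ite_mul, one_mul, zero_mul,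
      Finset.sum_ite_eq, Finset.mem_univ, if_true]
    refine Finset.sum_congr rfl fun i _ => ?_
    refine congrArg B (funext fun k => ?_)
    fin_cases k <;> rfl
  · intro r _
    refine Integrable.mul_const ?_ _
    refine integrable_of_bound (by fun_prop) 1 2 fun g => ?_
    rw [abs_mul, one_mul, pow_two]
    have : ∀ i, |g i| ≤ 1 + ‖g‖ := fun i => by
      have := PiLp.norm_apply_le g i
      rw [Real.norm_eq_abs] at this; linarith
    gcongr <;> apply this

/-! ### Taylor expansion along segments -/

theorem iteratedDeriv_line {E : Type*} [NormedAddCommGroup E] [NormedSpace ℝ E] {F : E → ℝ}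
    (hF : ContDiff ℝ (⊤ : ℕ∞) F) (x y : E) (k : ℕ) (t : ℝ) :
    iteratedDeriv k (fun t : ℝ => F (x + t • y)) t
      = iteratedFDeriv ℝ k F (x + t • y) (fun _ => y) := by
  have h1 : (fun t : ℝ => F (x + t • y))
      = (fun z => F (x + z)) ∘ (ContinuousLinearMap.toSpanSingleton ℝ y) := by
    ext t; simp
  have hF' : ContDiff ℝ (⊤ : ℕ∞) (fun z => F (x + z)) := hF.comp (by fun_prop)
  rw [iteratedDeriv_eq_iteratedFDeriv, h1, ContinuousLinearMap.iteratedFDeriv_comp_right _ hF' t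
    (by exact_mod_cast le_top), iteratedFDeriv_comp_add_left]
  simp

/-- Multivariate Taylor formula of order `k` at `x`; the factorial in the remainder is dropped. -/
theorem taylor_line {E : Type*} [NormedAddCommGroup E] [NormedSpace ℝ E] {F : E → ℝ}
    (hF : ContDiff ℝ (⊤ : ℕ∞) F) (x y : E) (k : ℕ) (K : ℝ)
    (hK : ∀ t ∈ Set.Icc (0 : ℝ) 1, ‖iteratedFDeriv ℝ (k + 1) F (x + t • y)‖ ≤ K) :
    |F (x + y) - ∑ j ∈ Finset.range (k + 1),
      ((j.factorial : ℝ)⁻¹ * iteratedFDeriv ℝ j F x (fun _ => y))| ≤ K * ‖y‖ ^ (k + 1) := by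
  set φ : ℝ → ℝ := fun t => F (x + t • y) with hφ
  have hc : ContDiff ℝ (⊤ : ℕ∞) φ := hF.comp (by fun_prop)
  have hu := uniqueDiffOn_Icc (zero_lt_one (α := ℝ))
  have hw : ∀ j, ∀ t ∈ Set.Icc (0 : ℝ) 1, iteratedDerivWithin j φ (Set.Icc 0 1) t
      = iteratedFDeriv ℝ j F (x + t • y) (fun _ => y) := by
    intro j t ht
    rw [iteratedDerivWithin_eq_iteratedDeriv hu
      ((hc.of_le (by exact_mod_cast le_top)).contDiffAt) ht, iteratedDeriv_line hF]
  have hK0 : 0 ≤ K := (norm_nonneg _).trans (hK 0 (by simp))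
  have := taylor_mean_remainder_bound (f := φ) (a := 0) (b := 1) (x := 1) (n := k)
    (C := K * ‖y‖ ^ (k + 1)) zero_le_one
    ((hc.of_le (by exact_mod_cast le_top)).contDiffOn) (by simp) (by
      intro t ht
      rw [hw _ t ht]
      refine (ContinuousMultilinearMap.le_opNorm _ _).trans ?_
      simp only [Finset.prod_const, Finset.card_univ, Fintype.card_fin]
      gcongr
      exact hK t ht)
  rw [taylor_within_apply, Real.norm_eq_abs] at this
  have e : ∀ j ∈ Finset.range (k + 1), ((j.factorial : ℝ)⁻¹ * (1 - 0) ^ j) •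
      iteratedDerivWithin j φ (Set.Icc 0 1) 0
      = (j.factorial : ℝ)⁻¹ * iteratedFDeriv ℝ j F x (fun _ => y) := by
    intro j _
    rw [hw j 0 (by simp)]
    simp
  rw [Finset.sum_congr rfl e] at this
  simp only [hφ, one_smul, sub_zero, one_pow, mul_one] at this
  refine this.trans (div_le_self (by positivity) ?_)
  exact_mod_cast Nat.factorial_pos k

/-! ### Derivatives of a periodic function are bounded -/

theorem periodic_deriv_bounded {n : ℕ} {L : ℝ} (hL : 0 < L) {V : En n → ℝ}
    (hV : ContDiff ℝ (⊤ : ℕ∞) V)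
    (hper : ∀ (q : En n) (i : Fin n), V (q + L • EuclideanSpace.single i (1 : ℝ)) = V q) (k : ℕ) :
    ∃ M : ℝ, 0 ≤ M ∧ ∀ q, ‖iteratedFDeriv ℝ k V q‖ ≤ M := by
  have hsum : ∀ (z : Fin n → ℤ) (s : Finset (Fin n)), Function.Periodic V
      (∑ i ∈ s, z i • (L • EuclideanSpace.single i (1 : ℝ) : En n)) := by
    intro z s
    induction s using Finset.induction_on with
    | empty => intro q; simp
    | insert i s hi ih =>
      rw [Finset.sum_insert hi]
      exact (Function.Periodic.zsmul (fun q => hper q i) (z i)).add_period ih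
  have hcont : Continuous (fun q => ‖iteratedFDeriv ℝ k V q‖) :=
    (hV.continuous_iteratedFDeriv (by exact_mod_cast le_top)).norm
  -- Every orbit of the lattice meets this compact ball.
  obtain ⟨M, hM⟩ := (isCompact_closedBall (0 : En n) (n * L)).exists_bound_of_continuousOn
    hcont.continuousOn
  refine ⟨max M 0, le_max_right _ _, fun q => ?_⟩
  set v : En n := ∑ i, (-⌊q i / L⌋) • (L • EuclideanSpace.single i (1 : ℝ) : En n) with hv
  have hp : Function.Periodic V v := hsum _ _
  have h1 : iteratedFDeriv ℝ k V q = iteratedFDeriv ℝ k V (q + v) := by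
    rw [← iteratedFDeriv_comp_add_right]
    congr 1
    ext x; exact (hp x).symm
  rw [h1]
  have h2 : q + v ∈ Metric.closedBall (0 : En n) (n * L) := by
    rw [mem_closedBall_zero_iff]
    have e : q + v = ∑ i, (q i - ⌊q i / L⌋ * L) • (EuclideanSpace.single i (1 : ℝ) : En n) := by
      ext j
      simp [hv, Pi.single_apply, sub_eq_add_neg, mul_comm L]
    rw [e]
    refine (norm_sum_le _ _).trans ?_
    have : ∀ i ∈ Finset.univ, ‖(q i - ⌊q i / L⌋ * L) • (EuclideanSpace.single i (1 : ℝ) : En n)‖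
        ≤ L := by
      intro i _
      rw [norm_smul, PiLp.norm_single, norm_one, mul_one, Real.norm_eq_abs, abs_le]
      have a1 := Int.floor_le (q i / L)
      have a2 := Int.lt_floor_add_one (q i / L)
      rw [le_div_iff₀ hL] at a1
      rw [div_lt_iff₀ hL] at a2
      constructor <;> nlinarith
    refine (Finset.sum_le_sum this).trans ?_
    simp
  have := hM _ h2
  simp only [norm_norm] at this
  exact this.trans (le_max_left _ _)

/-! ### The rejection probability -/

theorem inner_gradient_eq {n : ℕ} (V : En n → ℝ) (q y : En n) :
    ⟪gradient V q, y⟫ = fderiv ℝ V q y := by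
  rw [gradient, InnerProductSpace.toDual_symm_apply]

theorem norm_gradient_sub {n : ℕ} (V : En n → ℝ) (q q' : En n) :
    ‖gradient V q - gradient V q'‖ = ‖fderiv ℝ V q - fderiv ℝ V q'‖ := by
  rw [gradient, gradient, ← map_sub, LinearIsometryEquiv.norm_map]

theorem norm_gradient_eq {n : ℕ} (V : En n → ℝ) (q : En n) :
    ‖gradient V q‖ = ‖iteratedFDeriv ℝ 1 V q‖ := by
  rw [gradient, LinearIsometryEquiv.norm_map, norm_iteratedFDeriv_one]

theorem continuous_gradient {n : ℕ} {V : En n → ℝ} (hV : ContDiff ℝ (⊤ : ℕ∞) V) :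
    Continuous (gradient V) :=
  (InnerProductSpace.toDual ℝ (En n)).symm.continuous.comp (hV.continuous_fderiv (by simp))

theorem contDiff_fderiv_apply {n : ℕ} {V : En n → ℝ} (hV : ContDiff ℝ (⊤ : ℕ∞) V) (x : En n) :
    ContDiff ℝ (⊤ : ℕ∞) (fun z => fderiv ℝ V z x) :=
  (hV.fderiv_right (m := (⊤ : ℕ∞)) (by simp)).clm_apply contDiff_const

theorem norm_iteratedFDeriv_fderiv_apply {n : ℕ} {V : En n → ℝ} (hV : ContDiff ℝ (⊤ : ℕ∞) V)
    (x z : En n) (k : ℕ) :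
    ‖iteratedFDeriv ℝ k (fun z => fderiv ℝ V z x) z‖ ≤ ‖x‖ * ‖iteratedFDeriv ℝ (k + 1) V z‖ := by
  rw [← norm_iteratedFDeriv_fderiv]
  exact norm_iteratedFDeriv_clm_apply_const
    (hV.fderiv_right (m := (⊤ : ℕ∞)) (by simp)).contDiffAt (by exact_mod_cast le_top)

theorem iteratedFDeriv_one_fderiv_apply {n : ℕ} {V : En n → ℝ} (hV : ContDiff ℝ (⊤ : ℕ∞) V)
    (x z : En n) :
    iteratedFDeriv ℝ 1 (fun z => fderiv ℝ V z x) z (fun _ => x)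
      = iteratedFDeriv ℝ 2 V z (fun _ => x) := by
  have hd : DifferentiableAt ℝ (fderiv ℝ V) z :=
    ((hV.fderiv_right (m := (⊤ : ℕ∞)) (by simp)).differentiable (by simp)) z
  rw [iteratedFDeriv_one_apply, iteratedFDeriv_two_apply, fderiv_clm_apply hd (by fun_prop)]
  simp

/-- The error of the trapezoidal rule for `V` along the segment `[q, q + x]` is cubic. -/
theorem trapezoid {n : ℕ} {V : En n → ℝ} (hV : ContDiff ℝ (⊤ : ℕ∞) V) {M : ℝ}
    (hM : ∀ q, ‖iteratedFDeriv ℝ 3 V q‖ ≤ M) (q x : En n) :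
    |V (q + x) - V q - (fderiv ℝ V q x + fderiv ℝ V (q + x) x) / 2| ≤ 2 * M * ‖x‖ ^ 3 := by
  have h1 := taylor_line hV q x 2 M (fun t _ => hM _)
  have h2 := taylor_line (contDiff_fderiv_apply hV x) q x 1 (‖x‖ * M) (fun t _ =>
    (norm_iteratedFDeriv_fderiv_apply hV x _ 2).trans (by gcongr; exact hM _))
  have hx : 0 ≤ M * ‖x‖ ^ 3 :=
    mul_nonneg ((norm_nonneg _).trans (hM 0)) (by positivity)
  simp [Finset.sum_range_succ, iteratedFDeriv_one_fderiv_apply hV] at h1 h2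
  rw [abs_le] at h1 h2 ⊢
  have e : ‖x‖ * M * ‖x‖ ^ 2 = M * ‖x‖ ^ 3 := by ring
  rw [e] at h2
  constructor <;> linarith [h1.1, h1.2, h2.1, h2.2]

theorem Rk_nonneg {n : ℕ} (V : En n → ℝ) {dt : ℝ} (hdt : 0 < dt) (q q' : En n) :
    0 ≤ Rk V dt q q' := by
  unfold Rk Tker; positivity

theorem Rk_le_one {n : ℕ} (V : En n → ℝ) (dt : ℝ) (q q' : En n) : Rk V dt q q' ≤ 1 :=
  min_le_left _ _

/-- The logarithm of the Metropolis ratio is minus the trapezoidal error of `V` along the move, plus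
`dt / 4` times the difference of the squared gradients at the two ends. -/
theorem Rk_eq {n : ℕ} (V : En n → ℝ) {dt : ℝ} (hdt : 0 < dt) (q x : En n) :
    Rk V dt q (q + x) = min 1 (Real.exp (-(V (q + x) - V q
      - (fderiv ℝ V q x + fderiv ℝ V (q + x) x) / 2)
      + dt / 4 * (‖gradient V q‖ ^ 2 - ‖gradient V (q + x)‖ ^ 2))) := by
  unfold Rk Tker
  have hc : (0 : ℝ) < (4 * Real.pi * dt) ^ (-(n : ℝ) / 2) := by positivity
  set c := (4 * Real.pi * dt) ^ (-(n : ℝ) / 2)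
  have e1 : ∀ A B A' B' : ℝ, Real.exp A * (c * Real.exp B) / (Real.exp A' * (c * Real.exp B'))
      = Real.exp (A + B - (A' + B')) := by
    intro A B A' B'
    rw [Real.exp_sub, Real.exp_add, Real.exp_add]
    field_simp
  rw [e1, ← inner_gradient_eq, ← inner_gradient_eq]
  have e2 : q + x - q = x := by abel
  have e3 : q - (q + x) + dt • gradient V (q + x) = -(x - dt • gradient V (q + x)) := by abel
  rw [e2, e3, norm_neg, norm_add_sq_real, norm_sub_sq_real, norm_smul, norm_smul,
    real_inner_smul_right, real_inner_smul_right, real_inner_comm x (gradient V q),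
    real_inner_comm x (gradient V (q + x)), Real.norm_eq_abs, mul_pow, mul_pow, sq_abs]
  congr 2
  field_simp
  ring

theorem one_sub_min_exp_le (a : ℝ) : 1 - min 1 (Real.exp a) ≤ |a| := by
  rcases le_total 1 (Real.exp a) with h | h
  · rw [min_eq_left h]; simp
  · rw [min_eq_right h]
    linarith [Real.add_one_le_exp a, neg_le_abs a]

theorem rejection_bound {n : ℕ} {V : En n → ℝ} (hV : ContDiff ℝ (⊤ : ℕ∞) V) {M : ℝ}
    (hM1 : ∀ q, ‖iteratedFDeriv ℝ 1 V q‖ ≤ M) (hM2 : ∀ q, ‖iteratedFDeriv ℝ 2 V q‖ ≤ M)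
    (hM3 : ∀ q, ‖iteratedFDeriv ℝ 3 V q‖ ≤ M) {dt : ℝ} (hdt : 0 < dt) (q x : En n) :
    1 - Rk V dt q (q + x) ≤ 2 * M * ‖x‖ ^ 3 + M ^ 2 * (dt * ‖x‖) := by
  have hM0 : 0 ≤ M := (norm_nonneg _).trans (hM1 0)
  rw [Rk_eq V hdt]
  refine (one_sub_min_exp_le _).trans ((abs_add_le _ _).trans ?_)
  rw [abs_neg]
  refine add_le_add (trapezoid hV hM3 q x) ?_
  have h1 : ‖gradient V q - gradient V (q + x)‖ ≤ M * ‖x‖ := by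
    rw [norm_gradient_sub]
    have := Convex.norm_image_sub_le_of_norm_fderiv_le (𝕜 := ℝ) (f := fderiv ℝ V) (C := M)
      (s := Set.univ) (x := q + x) (y := q)
      (fun z _ => ((hV.fderiv_right (m := (⊤ : ℕ∞)) (by simp)).differentiable (by simp)) z)
      (fun z _ => by
        rw [← norm_iteratedFDeriv_one, norm_iteratedFDeriv_fderiv]; exact hM2 z)
      convex_univ (Set.mem_univ _) (Set.mem_univ _)
    simpa using this
  have h2 : ∀ p, ‖gradient V p‖ ≤ M := fun p => (norm_gradient_eq V p).trans_le (hM1 p)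
  have h3 : |‖gradient V q‖ - ‖gradient V (q + x)‖| ≤ M * ‖x‖ := (abs_norm_sub_norm_le _ _).trans h1
  rw [sq_sub_sq, abs_mul, abs_mul, abs_of_pos (by positivity : 0 < dt / 4),
    abs_of_nonneg (by positivity : 0 ≤ ‖gradient V q‖ + ‖gradient V (q + x)‖)]
  calc dt / 4 * ((‖gradient V q‖ + ‖gradient V (q + x)‖) * |‖gradient V q‖ - ‖gradient V (q + x)‖|)
      ≤ dt / 4 * ((M + M) * (M * ‖x‖)) := by gcongr <;> apply h2
    _ ≤ M ^ 2 * (dt * ‖x‖) := by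
      have : 0 ≤ M ^ 2 * (dt * ‖x‖) := by positivity
      nlinarith

/-! ### Averaging over the uniform variable -/

theorem integral_uniform_ite {R : ℝ} (h0 : 0 ≤ R) (h1 : R ≤ 1) (A B : ℝ) :
    ∫ u in Set.Icc (0 : ℝ) 1, (if u ≤ R then A else B) = R * A + (1 - R) * B := by
  have e : (fun u : ℝ => if u ≤ R then A else B)
      = fun u => (Set.Iic R).indicator (fun _ => A - B) u + B := by
    ext u
    by_cases h : u ≤ R <;> simp [h]
  rw [e, integral_add, setIntegral_indicator measurableSet_Iic]
  · have : Set.Icc (0 : ℝ) 1 ∩ Set.Iic R = Set.Icc 0 R := by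
      ext u; simp only [Set.mem_inter_iff, Set.mem_Icc, Set.mem_Iic]
      constructor
      · rintro ⟨⟨a, b⟩, c⟩; exact ⟨a, c⟩
      · rintro ⟨a, c⟩; exact ⟨⟨a, c.trans h1⟩, c⟩
    rw [this]
    simp [measureReal_def, h0]
    ring
  · exact (integrable_const _).indicator measurableSet_Iic
  · exact integrable_const _

/-- Conditionally on `g`, the average over `u` is the value for the unmetropolized increment minus a
rejection term. -/
theorem inner_integral_eq {n : ℕ} (V : En n → ℝ) {dt : ℝ} (hdt : 0 < dt) (f : En n → ℝ)
    (q g : En n) :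
    ∫ u in Set.Icc (0 : ℝ) 1, f (deltaInc V dt q g u)
      = f ((-dt) • gradient V q + Real.sqrt (2 * dt) • g)
        - (1 - Rk V dt q (propMove V dt q g)) *
          (f ((-dt) • gradient V q + Real.sqrt (2 * dt) • g) - f 0) := by
  unfold deltaInc
  simp_rw [apply_ite f]
  rw [integral_uniform_ite (Rk_nonneg V hdt _ _) (Rk_le_one V _ _ _)]
  ring

/-! ### Weak expansion of the unmetropolized step -/

theorem abs_mlm_le {n k : ℕ} (B : ContinuousMultilinearMap ℝ (fun _ : Fin k => En n) ℝ)
    (g : En n) : |B (fun _ => g)| ≤ ‖B‖ * (1 + ‖g‖) ^ k := by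
  refine (B.le_opNorm _).trans ?_
  simp only [Finset.prod_const, Finset.card_univ, Fintype.card_fin]
  gcongr
  linarith

theorem continuous_mlm {n k : ℕ} (B : ContinuousMultilinearMap ℝ (fun _ : Fin k => En n) ℝ) :
    Continuous (fun g : En n => B (fun _ => g)) :=
  B.cont.comp (by fun_prop)

theorem integrable_mlm {n k : ℕ} (B : ContinuousMultilinearMap ℝ (fun _ : Fin k => En n) ℝ) :
    Integrable (fun g => B (fun _ => g)) (gauss n) :=
  integrable_of_bound (continuous_mlm B).measurable _ k (abs_mlm_le B)

theorem mlm_smul {n k : ℕ} (B : ContinuousMultilinearMap ℝ (fun _ : Fin k => En n) ℝ)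
    (c : ℝ) (g : En n) : B (fun _ => c • g) = c ^ k * B (fun _ => g) := by
  have := B.map_smul_univ (fun _ => c) (fun _ => g)
  simpa using this

theorem integral_mlm_odd {n k : ℕ} (hk : Odd k)
    (B : ContinuousMultilinearMap ℝ (fun _ : Fin k => En n) ℝ) :
    ∫ g, B (fun _ => g) ∂(gauss n) = 0 := by
  refine integral_odd fun g => ?_
  have := mlm_smul B (-1) g
  simpa [hk.neg_one_pow] using this

/-- The part of the expansion of `f (s g + b)` whose Gaussian average is computed exactly: the
Taylor polynomial of degree three in `s g`, plus the term linear in `b`, itself expanded to first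
order in `s g`. -/
def taylorPart {n : ℕ} (f : En n → ℝ) (s : ℝ) (b g : En n) : ℝ :=
  f 0 + fderiv ℝ f 0 b
    + s * iteratedFDeriv ℝ 1 f 0 (fun _ => g)
    + s ^ 2 / 2 * iteratedFDeriv ℝ 2 f 0 (fun _ => g)
    + s ^ 3 / 6 * iteratedFDeriv ℝ 3 f 0 (fun _ => g)
    + s * iteratedFDeriv ℝ 1 (fun z => fderiv ℝ f z b) 0 (fun _ => g)

theorem continuous_taylorPart {n : ℕ} (f : En n → ℝ) (s : ℝ) (b : En n) :
    Continuous (taylorPart f s b) := by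
  unfold taylorPart
  have := fun k (B : ContinuousMultilinearMap ℝ (fun _ : Fin k => En n) ℝ) => continuous_mlm B
  have h1 := this 1 (iteratedFDeriv ℝ 1 f 0)
  have h2 := this 2 (iteratedFDeriv ℝ 2 f 0)
  have h3 := this 3 (iteratedFDeriv ℝ 3 f 0)
  have h4 := this 1 (iteratedFDeriv ℝ 1 (fun z => fderiv ℝ f z b) 0)
  exact ((((continuous_const.add (continuous_const.mul h1)).add (continuous_const.mul h2)).add
    (continuous_const.mul h3)).add (continuous_const.mul h4))

theorem taylorPart_integrable_integral {n : ℕ} (f : En n → ℝ) (s : ℝ) (b : En n) :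
    Integrable (taylorPart f s b) (gauss n) ∧
      ∫ g, taylorPart f s b g ∂(gauss n) = f 0 + fderiv ℝ f 0 b + s ^ 2 / 2 * lap f 0 := by
  have i0 : Integrable (fun _ : En n => f 0 + fderiv ℝ f 0 b) (gauss n) := integrable_const _
  have i1 := (integrable_mlm (iteratedFDeriv ℝ 1 f 0)).const_mul s
  have i2 := (integrable_mlm (iteratedFDeriv ℝ 2 f 0)).const_mul (s ^ 2 / 2)
  have i3 := (integrable_mlm (iteratedFDeriv ℝ 3 f 0)).const_mul (s ^ 3 / 6)
  have i4 := (integrable_mlm (iteratedFDeriv ℝ 1 (fun z => fderiv ℝ f z b) 0)).const_mul s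
  refine ⟨(((i0.add i1).add i2).add i3).add i4, ?_⟩
  unfold taylorPart
  have j1 := i0.add i1
  have j2 := j1.add i2
  have j3 := j2.add i3
  simp only [Pi.add_def] at j1 j2 j3
  rw [integral_add j3 i4, integral_add j2 i3, integral_add j1 i2, integral_add i0 i1]
  simp only [integral_const_mul]
  rw [integral_mlm_odd (k := 3) (by decide), integral_quadratic]
  simp only [integral_mlm_odd (k := 1) (by decide)]
  simp [lap]

/-- The remainder of `taylorPart` comes from three expansions: of `f` around `s g` in direction `b`
(order 2), of `z ↦ Df(z) b` around `0` (order 2), and of `f` around `0` (order 4). -/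
theorem taylorPart_error {n : ℕ} {f : En n → ℝ} (hf : ContDiff ℝ (⊤ : ℕ∞) f) {s : ℝ} {b g : En n}
    {K : ℝ} (hK : ∀ k ≤ 4, ∀ z, ‖z‖ ≤ ‖s • g‖ + ‖b‖ → ‖iteratedFDeriv ℝ k f z‖ ≤ K) :
    |f (b + s • g) - taylorPart f s b g|
      ≤ K * (‖b‖ ^ 2 + ‖b‖ * ‖s • g‖ ^ 2 + ‖s • g‖ ^ 4) := by
  have hb := norm_nonneg b
  have hy := norm_nonneg (s • g)
  have seg : ∀ (u : En n), ∀ t ∈ Set.Icc (0 : ℝ) 1, ‖t • u‖ ≤ ‖u‖ := by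
    intro u t ht
    rw [norm_smul, Real.norm_eq_abs, abs_of_nonneg ht.1]
    exact mul_le_of_le_one_left (norm_nonneg _) ht.2
  have h1 := taylor_line hf (s • g) b 1 K (fun t ht => hK 2 (by norm_num) _
    ((norm_add_le _ _).trans (by gcongr; exact seg b t ht)))
  have h2 := taylor_line (contDiff_fderiv_apply hf b) 0 (s • g) 1 (‖b‖ * K) (fun t ht =>
    (norm_iteratedFDeriv_fderiv_apply hf b _ 2).trans (by
      gcongr
      refine hK 3 (by norm_num) _ ?_
      rw [zero_add]
      linarith [seg (s • g) t ht]))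
  have h3 := taylor_line hf 0 (s • g) 3 K (fun t ht => hK 4 le_rfl _ (by
      rw [zero_add]
      linarith [seg (s • g) t ht]))
  simp only [Finset.sum_range_succ, Finset.sum_range_zero, mlm_smul, zero_add] at h1 h2 h3
  simp only [iteratedFDeriv_zero_apply] at h1 h2 h3
  rw [iteratedFDeriv_one_apply] at h1
  norm_num [Nat.factorial] at h1 h2 h3
  unfold taylorPart
  rw [add_comm b]
  have e : K * (‖b‖ ^ 2 + ‖b‖ * ‖s • g‖ ^ 2 + ‖s • g‖ ^ 4)
    = K * ‖b‖ ^ 2 + ‖b‖ * K * ‖s • g‖ ^ 2 + K * ‖s • g‖ ^ 4 := by ring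
  rw [e]
  refine le_trans (le_of_eq ?_) ((abs_add_three _ _ _).trans (add_le_add_three h1 h2 h3))
  congr 1
  simp
  ring

/-- One polynomial bound valid for all derivatives of order at most four. -/
theorem uniform_growth {n : ℕ} {f : En n → ℝ}
    (hfgrowth : ∀ k : ℕ, ∃ (Ck : ℝ) (m : ℕ), ∀ x : En n,
      ‖iteratedFDeriv ℝ k f x‖ ≤ Ck * (1 + ‖x‖) ^ m) :
    ∃ (C : ℝ) (m : ℕ), 0 ≤ C ∧ ∀ k ≤ 4, ∀ x : En n,
      ‖iteratedFDeriv ℝ k f x‖ ≤ C * (1 + ‖x‖) ^ m := by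
  choose c m h using hfgrowth
  refine ⟨∑ k ∈ Finset.range 5, |c k|, ∑ k ∈ Finset.range 5, m k,
    Finset.sum_nonneg fun _ _ => abs_nonneg _, fun k hk x => (h k x).trans ?_⟩
  have hk' : k ∈ Finset.range 5 := Finset.mem_range.2 (by omega)
  have h1 : c k ≤ ∑ k ∈ Finset.range 5, |c k| :=
    (le_abs_self _).trans (Finset.single_le_sum (f := fun k => |c k|)
      (fun _ _ => abs_nonneg _) hk')
  have h2 : m k ≤ ∑ k ∈ Finset.range 5, m k :=
    Finset.single_le_sum (f := m) (fun _ _ => Nat.zero_le _) hk'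
  have h3 : 0 ≤ ∑ k ∈ Finset.range 5, |c k| := Finset.sum_nonneg fun _ _ => abs_nonneg _
  have h4 : (1 : ℝ) ≤ 1 + ‖x‖ := by linarith [norm_nonneg x]
  gcongr

/-- Second-order weak consistency of one Euler–Maruyama step, uniform over drifts bounded by `M`. -/
theorem euler_expansion {n : ℕ} {f : En n → ℝ} (hf : ContDiff ℝ (⊤ : ℕ∞) f) {C : ℝ} {m : ℕ}
    (hC : 0 ≤ C) (hgr : ∀ k ≤ 4, ∀ x : En n, ‖iteratedFDeriv ℝ k f x‖ ≤ C * (1 + ‖x‖) ^ m)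
    {M : ℝ} (hM : 0 ≤ M) {dt : ℝ} (hdt : 0 < dt) (hdt1 : dt ≤ 1) {a : En n} (ha : ‖a‖ ≤ M) :
    Integrable (fun g => f ((-dt) • a + Real.sqrt (2 * dt) • g)) (gauss n) ∧
    |∫ g, f ((-dt) • a + Real.sqrt (2 * dt) • g) ∂(gauss n) - f 0
        - dt * (-fderiv ℝ f 0 a + lap f 0)|
      ≤ C * (M + 2) ^ m * (M ^ 2 + 2 * M + 4) * (∫ g, (1 + ‖g‖) ^ (m + 4) ∂(gauss n)) * dt ^ 2 := by
  set s := Real.sqrt (2 * dt) with hs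
  have hs0 : 0 ≤ s := Real.sqrt_nonneg _
  have hs2 : s ^ 2 = 2 * dt := Real.sq_sqrt (by positivity)
  have hsle : s ≤ 2 := by nlinarith
  set b := (-dt) • a with hb
  have hbn : ‖b‖ ≤ dt * M := by
    rw [hb, norm_smul, norm_neg, Real.norm_eq_abs, abs_of_pos hdt]; gcongr
  have hbM : ‖b‖ ≤ M := hbn.trans (mul_le_of_le_one_left hM hdt1)
  have herr : ∀ g, |f (b + s • g) - taylorPart f s b g|
      ≤ (C * (M + 2) ^ m * (M ^ 2 + 2 * M + 4) * dt ^ 2) * (1 + ‖g‖) ^ (m + 4) := by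
    intro g
    have hg := norm_nonneg g
    have hyn : ‖s • g‖ = s * ‖g‖ := by rw [norm_smul, Real.norm_eq_abs, abs_of_nonneg hs0]
    have hw : (1 : ℝ) ≤ 1 + ‖g‖ := by linarith
    refine (taylorPart_error hf (K := C * ((M + 2) * (1 + ‖g‖)) ^ m) ?_).trans ?_
    · intro k hk z hz
      refine (hgr k hk z).trans ?_
      gcongr
      rw [hyn] at hz
      nlinarith
    · have e1 : ‖b‖ ^ 2 ≤ dt ^ 2 * M ^ 2 * (1 + ‖g‖) ^ 4 := by
        calc ‖b‖ ^ 2 ≤ (dt * M) ^ 2 := by gcongr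
          _ = dt ^ 2 * M ^ 2 * 1 := by ring
          _ ≤ _ := by gcongr; exact one_le_pow₀ hw
      have e2 : ‖b‖ * ‖s • g‖ ^ 2 ≤ dt ^ 2 * (2 * M) * (1 + ‖g‖) ^ 4 := by
        calc ‖b‖ * ‖s • g‖ ^ 2 ≤ (dt * M) * (s * (1 + ‖g‖)) ^ 2 := by
              rw [hyn]; gcongr; linarith
          _ = dt ^ 2 * (2 * M) * (1 + ‖g‖) ^ 2 := by rw [mul_pow, hs2]; ring
          _ ≤ _ := by gcongr; norm_num
      have e3 : ‖s • g‖ ^ 4 ≤ dt ^ 2 * 4 * (1 + ‖g‖) ^ 4 := by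
        calc ‖s • g‖ ^ 4 ≤ (s * (1 + ‖g‖)) ^ 4 := by rw [hyn]; gcongr; linarith
          _ = (s ^ 2) ^ 2 * (1 + ‖g‖) ^ 4 := by ring
          _ = _ := by rw [hs2]; ring
      calc C * ((M + 2) * (1 + ‖g‖)) ^ m * (‖b‖ ^ 2 + ‖b‖ * ‖s • g‖ ^ 2 + ‖s • g‖ ^ 4)
          ≤ C * ((M + 2) * (1 + ‖g‖)) ^ m * (dt ^ 2 * M ^ 2 * (1 + ‖g‖) ^ 4
            + dt ^ 2 * (2 * M) * (1 + ‖g‖) ^ 4 + dt ^ 2 * 4 * (1 + ‖g‖) ^ 4) := by gcongr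
        _ = _ := by rw [mul_pow, pow_add]; ring
  obtain ⟨iP, eP⟩ := taylorPart_integrable_integral f s b
  have hcont : Continuous (fun g : En n => f (b + s • g)) := hf.continuous.comp (by fun_prop)
  have iR : Integrable (fun g => f (b + s • g) - taylorPart f s b g) (gauss n) :=
    integrable_of_bound (hcont.sub (continuous_taylorPart f s b)).measurable _ _ herr
  have hI : Integrable (fun g => f (b + s • g)) (gauss n) := by
    refine (iR.add iP).congr (Filter.Eventually.of_forall fun g => ?_)
    simp
  refine ⟨hI, ?_⟩
  have key : ∫ g, f (b + s • g) ∂(gauss n) - f 0 - dt * (-fderiv ℝ f 0 a + lap f 0)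
      = ∫ g, (f (b + s • g) - taylorPart f s b g) ∂(gauss n) := by
    rw [integral_sub hI iP, eP, hs2, hb, map_smul, smul_eq_mul]
    ring
  rw [key]
  refine (integral_bound _ _ herr).trans (le_of_eq ?_)
  ring

/-! ### The cost of rejections -/

theorem measurable_Rk_propMove {n : ℕ} {V : En n → ℝ} (hV : ContDiff ℝ (⊤ : ℕ∞) V) (dt : ℝ)
    (q : En n) : Measurable (fun g => Rk V dt q (propMove V dt q g)) := by
  have hc := (continuous_gradient hV).measurable
  have hv := hV.continuous.measurable
  unfold Rk Tker propMove
  fun_prop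

/-- Rejections are an `O(dt ^ (3/2))` event and change the observable by `O(dt ^ (1/2))`. -/
theorem rejection_term_bound {n : ℕ} {V f : En n → ℝ} (hV : ContDiff ℝ (⊤ : ℕ∞) V)
    (hf : ContDiff ℝ (⊤ : ℕ∞) f) {C : ℝ} {m : ℕ}
    (hC : 0 ≤ C) (hgr : ∀ k ≤ 4, ∀ x : En n, ‖iteratedFDeriv ℝ k f x‖ ≤ C * (1 + ‖x‖) ^ m)
    {M : ℝ} (hM1 : ∀ q, ‖iteratedFDeriv ℝ 1 V q‖ ≤ M) (hM2 : ∀ q, ‖iteratedFDeriv ℝ 2 V q‖ ≤ M)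
    (hM3 : ∀ q, ‖iteratedFDeriv ℝ 3 V q‖ ≤ M) {dt : ℝ} (hdt : 0 < dt) (hdt1 : dt ≤ 1)
    (q g : En n) :
    |(1 - Rk V dt q (propMove V dt q g)) *
        (f ((-dt) • gradient V q + Real.sqrt (2 * dt) • g) - f 0)|
      ≤ ((2 * M * (M + 2) ^ 4 + M ^ 2 * (M + 2) ^ 2) * C * (M + 3) ^ m * dt ^ 2)
        * (1 + ‖g‖) ^ (m + 4) := by
  have hM0 : 0 ≤ M := (norm_nonneg _).trans (hM1 0)
  have hg := norm_nonneg g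
  have hw : (1 : ℝ) ≤ 1 + ‖g‖ := by linarith
  set x := (-dt) • gradient V q + Real.sqrt (2 * dt) • g with hx
  have hp : propMove V dt q g = q + x := by
    rw [propMove, hx, neg_smul]; abel
  set r := Real.sqrt dt with hr
  have hr0 : 0 ≤ r := Real.sqrt_nonneg _
  have hr2 : r ^ 2 = dt := Real.sq_sqrt hdt.le
  have hr1 : r ≤ 1 := by nlinarith
  -- The increment is of size `√dt`; four such factors give `dt ^ 2`.
  have hxn : ‖x‖ ≤ r * ((M + 2) * (1 + ‖g‖)) := by
    have h1 : ‖(-dt) • gradient V q‖ ≤ r * M := by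
      rw [norm_smul, norm_neg, Real.norm_eq_abs, abs_of_pos hdt, norm_gradient_eq]
      have : dt ≤ r := by nlinarith
      gcongr
      exact hM1 q
    have h2 : ‖Real.sqrt (2 * dt) • g‖ ≤ r * (2 * ‖g‖) := by
      rw [norm_smul, Real.norm_eq_abs, abs_of_nonneg (Real.sqrt_nonneg _),
        Real.sqrt_mul (by norm_num)]
      have : Real.sqrt 2 ≤ 2 := by
        rw [Real.sqrt_le_left (by norm_num)]; norm_num
      calc Real.sqrt 2 * r * ‖g‖ ≤ 2 * r * ‖g‖ := by gcongr
        _ = _ := by ring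
    calc ‖x‖ ≤ r * M + r * (2 * ‖g‖) := (norm_add_le _ _).trans (add_le_add h1 h2)
      _ = r * (M + 2 * ‖g‖) := by ring
      _ ≤ _ := by gcongr; nlinarith
  have hxn' : 1 + ‖x‖ ≤ (M + 3) * (1 + ‖g‖) := by
    have : r * ((M + 2) * (1 + ‖g‖)) ≤ (M + 2) * (1 + ‖g‖) :=
      mul_le_of_le_one_left (by positivity) hr1
    nlinarith
  have hfx : |f x - f 0| ≤ C * ((M + 3) * (1 + ‖g‖)) ^ m * ‖x‖ := by
    have := taylor_line hf 0 x 0 (C * ((M + 3) * (1 + ‖g‖)) ^ m) (fun t ht => by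
      refine (hgr 1 (by norm_num) _).trans ?_
      gcongr
      refine le_trans ?_ hxn'
      rw [zero_add, norm_smul, Real.norm_eq_abs, abs_of_nonneg ht.1]
      gcongr
      exact mul_le_of_le_one_left (norm_nonneg _) ht.2)
    simpa using this
  have hR := rejection_bound hV hM1 hM2 hM3 hdt q x
  rw [hp, abs_mul, abs_of_nonneg (by linarith [Rk_le_one V dt q (q + x)])]
  calc (1 - Rk V dt q (q + x)) * |f x - f 0|
      ≤ (2 * M * ‖x‖ ^ 3 + M ^ 2 * (dt * ‖x‖)) * (C * ((M + 3) * (1 + ‖g‖)) ^ m * ‖x‖) := by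
        gcongr
    _ = (2 * M * ‖x‖ ^ 4 + M ^ 2 * (dt * ‖x‖ ^ 2)) * (C * ((M + 3) * (1 + ‖g‖)) ^ m) := by ring
    _ ≤ (2 * M * (r * ((M + 2) * (1 + ‖g‖))) ^ 4
          + M ^ 2 * (dt * (r * ((M + 2) * (1 + ‖g‖))) ^ 2)) * (C * ((M + 3) * (1 + ‖g‖)) ^ m) := by
        gcongr
    _ = (2 * M * (M + 2) ^ 4 * (1 + ‖g‖) ^ 4 + M ^ 2 * (M + 2) ^ 2 * (1 + ‖g‖) ^ 2)
          * (C * (M + 3) ^ m * dt ^ 2) * (1 + ‖g‖) ^ m := by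
        rw [mul_pow r _ 2, hr2, mul_pow r _ 4, show r ^ 4 = (r ^ 2) ^ 2 by ring, hr2,
          mul_pow (M + 3)]
        ring
    _ ≤ (2 * M * (M + 2) ^ 4 * (1 + ‖g‖) ^ 4 + M ^ 2 * (M + 2) ^ 2 * (1 + ‖g‖) ^ 4)
          * (C * (M + 3) ^ m * dt ^ 2) * (1 + ‖g‖) ^ m := by
        gcongr; norm_num
    _ = _ := by rw [pow_add]; ring

theorem stmt17 (n : ℕ) (hn : 1 ≤ n) (L : ℝ) (hL : 0 < L)
    (V : En n → ℝ) (hV : ContDiff ℝ (⊤ : ℕ∞) V)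
    (hper : ∀ (q : En n) (i : Fin n), V (q + L • EuclideanSpace.single i (1 : ℝ)) = V q)
    (f : En n → ℝ) (hf : ContDiff ℝ (⊤ : ℕ∞) f)
    (hfgrowth : ∀ k : ℕ, ∃ (Ck : ℝ) (m : ℕ), ∀ x : En n,
      ‖iteratedFDeriv ℝ k f x‖ ≤ Ck * (1 + ‖x‖) ^ m) :
    ∃ C ≥ (0 : ℝ), ∃ dts > (0 : ℝ), ∀ dt : ℝ, 0 < dt → dt ≤ dts → ∀ q : En n,
      |obsbar V dt f q - f 0 -
          dt * (-⟪gradient V q, gradient f 0⟫ + lap f 0)| ≤ C * dt ^ 2 := by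
  obtain ⟨C, m, hC, hgr⟩ := uniform_growth hfgrowth
  obtain ⟨A1, hA1, h1⟩ := periodic_deriv_bounded hL hV hper 1
  obtain ⟨A2, hA2, h2⟩ := periodic_deriv_bounded hL hV hper 2
  obtain ⟨A3, hA3, h3⟩ := periodic_deriv_bounded hL hV hper 3
  set M := A1 + A2 + A3 with hMdef
  have hM : 0 ≤ M := by positivity
  have hM1 : ∀ q, ‖iteratedFDeriv ℝ 1 V q‖ ≤ M := fun q => (h1 q).trans (by linarith)
  have hM2 : ∀ q, ‖iteratedFDeriv ℝ 2 V q‖ ≤ M := fun q => (h2 q).trans (by linarith)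
  have hM3 : ∀ q, ‖iteratedFDeriv ℝ 3 V q‖ ≤ M := fun q => (h3 q).trans (by linarith)
  set J := ∫ g, (1 + ‖g‖) ^ (m + 4) ∂(gauss n) with hJ
  have hJ0 : 0 ≤ J := integral_nonneg fun g => by positivity
  refine ⟨C * (M + 2) ^ m * (M ^ 2 + 2 * M + 4) * J
    + (2 * M * (M + 2) ^ 4 + M ^ 2 * (M + 2) ^ 2) * C * (M + 3) ^ m * J, by positivity, 1, one_pos,
    fun dt hdt hdt1 q => ?_⟩
  obtain ⟨iE, hE⟩ := euler_expansion hf hC hgr hM hdt hdt1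
    (a := gradient V q) ((norm_gradient_eq V q).trans_le (hM1 q))
  have hrej := rejection_term_bound hV hf hC hgr hM1 hM2 hM3 hdt hdt1 q
  have hmeas : Measurable (fun g => (1 - Rk V dt q (propMove V dt q g)) *
      (f ((-dt) • gradient V q + Real.sqrt (2 * dt) • g) - f 0)) :=
    (measurable_const.sub (measurable_Rk_propMove hV dt q)).mul
      (((hf.continuous.comp (by fun_prop)).sub continuous_const).measurable)
  have iR := integrable_of_bound hmeas _ _ hrej
  have hB := integral_bound _ _ hrej
  have hobs : obsbar V dt f q = ∫ g, f ((-dt) • gradient V q + Real.sqrt (2 * dt) • g) ∂(gauss n)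
      - ∫ g, (1 - Rk V dt q (propMove V dt q g)) *
        (f ((-dt) • gradient V q + Real.sqrt (2 * dt) • g) - f 0) ∂(gauss n) := by
    unfold obsbar
    simp_rw [inner_integral_eq V hdt f q]
    exact integral_sub iE iR
  rw [hobs, real_inner_comm, inner_gradient_eq]
  have hE' := abs_le.1 hE
  have hB' := abs_le.1 hB
  rw [add_mul]
  rw [abs_le]
  constructor <;> linarith [hE'.1, hE'.2, hB'.1, hB'.2]
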